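/- Let t be a flat tree with k baskets of size H and m apples of weights a_1, ..., a_m satisfying H·k = a_1 + ... + a_m. Then t is a Union-Find tree if and only if there is a partition B_1, ..., B_k of {1, ..., m} with Σ_{i ∈ B_j} a_i = H for every j. -/

import Mathlib

open scoped Classical

/-- The raw data of a ranked tree: a node set `V`, a root, a parent map
(with `parent root = root` by convention) and a rank function. -/
structure PreTree (V : Type) where
  root : V
  parent : V → V
  rank : V → ℕ

namespace PreTree

variable {V W : Type}

/-- `Anc t x y` : `x` is a (weak) ancestor of `y` in `t`, i.e. `x = parent^[k] y`. -/
def Anc (t : PreTree V) (x y : V) : Prop := ∃ k : ℕ, t.parent^[k] y = x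

/-- `t` is a tree: the parent map fixes the root and every node reaches the root. -/
def IsTree (t : PreTree V) : Prop :=
  t.parent t.root = t.root ∧ ∀ x, t.Anc t.root x

/-- The rank strictly decreases from parent to child. -/
def RankDec (t : PreTree V) : Prop :=
  ∀ x, x ≠ t.root → t.rank x < t.rank (t.parent x)

/-- A ranked tree: a tree whose rank function strictly decreases towards the leaves. -/
def IsRanked (t : PreTree V) : Prop := t.IsTree ∧ t.RankDec

/-- `push t x y` : reattach `x` as a child of `y`, everything else unchanged. -/
noncomputable def push (t : PreTree V) (x y : V) : PreTree V :=
  ⟨t.root, Function.update t.parent x y, t.rank⟩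

/-- `x` and `y` are (distinct, non-root) siblings in `t`. -/
def Siblings (t : PreTree V) (x y : V) : Prop :=
  x ≠ y ∧ x ≠ t.root ∧ y ≠ t.root ∧ t.parent x = t.parent y

/-- One push step: `t ⊢ t'`. -/
def PushStep (t t' : PreTree V) : Prop :=
  ∃ x y, t.Siblings x y ∧ t.rank x < t.rank y ∧ t' = t.push x y

/-- Merge of two trees on disjoint node sets: attach `root s` below `root t`,
incrementing the rank of `root t` exactly when the two root ranks are equal. -/
noncomputable def merge (t : PreTree V) (s : PreTree W) : PreTree (V ⊕ W) where
  root := Sum.inl t.root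
  parent := fun z => match z with
    | Sum.inl v => Sum.inl (t.parent v)
    | Sum.inr w => if w = s.root then Sum.inl t.root else Sum.inr (s.parent w)
  rank := fun z => match z with
    | Sum.inl v =>
        if v = t.root ∧ t.rank t.root = s.rank s.root then t.rank v + 1 else t.rank v
    | Sum.inr w => s.rank w

/-- Collapse: reattach every non-root (weak) ancestor of `x` directly to the root. -/
noncomputable def collapse (t : PreTree V) (x : V) : PreTree V where
  root := t.root
  parent := fun y => if y ≠ t.root ∧ t.Anc y x then t.root else t.parent y
  rank := t.rank

/-- `s ⪯ t` : every ancestor relation of `s` also holds in `t`. -/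
def Le (s t : PreTree V) : Prop := ∀ x y, s.Anc x y → t.Anc x y

/-- Isomorphism of (pre)trees: a bijection preserving root, parent and rank. -/
structure Iso (t : PreTree V) (s : PreTree W) where
  toEquiv : V ≃ W
  map_root : toEquiv t.root = s.root
  map_parent : ∀ x, toEquiv (t.parent x) = s.parent (toEquiv x)
  map_rank : ∀ x, s.rank (toEquiv x) = t.rank x

theorem anc_parent_of_ne {t : PreTree V} {x y : V} (h : t.Anc x y) (hne : y ≠ x) :
    t.Anc x (t.parent y) := by
  obtain ⟨k, hk⟩ := h
  cases k with
  | zero => exact absurd hk hne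
  | succ n => exact ⟨n, by rw [← hk, Function.iterate_succ_apply]⟩

/-- The subtree of `t` rooted at `x`, on the node set of (weak) descendants of `x`. -/
noncomputable def subtree (t : PreTree V) (x : V) : PreTree {y : V // t.Anc x y} where
  root := ⟨x, ⟨0, rfl⟩⟩
  rank := fun y => t.rank y
  parent := fun y =>
    if h : (y : V) = x then ⟨x, ⟨0, rfl⟩⟩ else ⟨t.parent y, anc_parent_of_ne y.2 h⟩

/-- `DepthIs t x k` : the depth of `x` in `t` is exactly `k`. -/
def DepthIs (t : PreTree V) (x : V) (k : ℕ) : Prop :=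
  t.parent^[k] x = t.root ∧ ∀ j < k, t.parent^[j] x ≠ t.root

end PreTree

open PreTree

/-- Union trees: least class (up to isomorphism) containing singletons and closed
under `merge` of trees whose root ranks satisfy `rank t ≥ rank s`. -/
inductive IsUnion : {V : Type} → PreTree V → Prop
  | singleton {V : Type} (t : PreTree V)
      (h1 : ∀ x, x = t.root) (h2 : t.rank t.root = 0) : IsUnion t
  | merge {V W : Type} (t : PreTree V) (s : PreTree W)
      (ht : IsUnion t) (hs : IsUnion s) (hr : s.rank s.root ≤ t.rank t.root) :
      IsUnion (t.merge s)
  | iso {V W : Type} (t : PreTree V) (s : PreTree W)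
      (ht : IsUnion t) (hi : Nonempty (t.Iso s)) : IsUnion s

/-- Union-Find trees: least class (up to isomorphism) containing singletons and
closed under `merge` (with `rank t ≥ rank s`) and `collapse`. -/
inductive IsUnionFind : {V : Type} → PreTree V → Prop
  | singleton {V : Type} (t : PreTree V)
      (h1 : ∀ x, x = t.root) (h2 : t.rank t.root = 0) : IsUnionFind t
  | merge {V W : Type} (t : PreTree V) (s : PreTree W)
      (ht : IsUnionFind t) (hs : IsUnionFind s) (hr : s.rank s.root ≤ t.rank t.root) :
      IsUnionFind (t.merge s)
  | collapse {V : Type} (t : PreTree V) (x : V) (ht : IsUnionFind t) :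
      IsUnionFind (t.collapse x)
  | iso {V W : Type} (t : PreTree V) (s : PreTree W)
      (ht : IsUnionFind t) (hi : Nonempty (t.Iso s)) : IsUnionFind s

/-- The flat tree with `k` baskets of size `H` and `m` apples of weights `a i`.
Constant part `Fin 8`: `0` = root (rank 4), `1` = rank-0 leaf, `2` = rank-1 node
with rank-0 child `3`, `4` = rank-2 node with rank-0 child `5` and rank-1 child `6`
which has rank-0 child `7`. Apple `i` has nodes `Fin (a i + 2)`: `0` = apple root
(rank 2), `1` = rank-0 child, the rest rank-1 children. Basket `b` has nodes
`Fin (H + 4)`: `0` = basket root (rank 3), `1` = rank-1 child with rank-0 child `2`,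
and `H + 1` further rank-0 children of the basket root. -/
noncomputable def flatTree (k H m : ℕ) (a : Fin m → ℕ) :
    PreTree (Fin 8 ⊕ (Σ i : Fin m, Fin (a i + 2)) ⊕ (Fin k × Fin (H + 4))) where
  root := Sum.inl 0
  parent := fun z => match z with
    | Sum.inl i =>
        if i = 3 then Sum.inl 2
        else if i = 5 ∨ i = 6 then Sum.inl 4
        else if i = 7 then Sum.inl 6
        else Sum.inl 0
    | Sum.inr (Sum.inl ⟨i, j⟩) =>
        if j = 0 then Sum.inl 0 else Sum.inr (Sum.inl ⟨i, 0⟩)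
    | Sum.inr (Sum.inr (b, j)) =>
        if j = 0 then Sum.inl 0
        else if j = 2 then Sum.inr (Sum.inr (b, 1))
        else Sum.inr (Sum.inr (b, 0))
  rank := fun z => match z with
    | Sum.inl i =>
        if i = 0 then 4 else if i = 2 ∨ i = 6 then 1 else if i = 4 then 2 else 0
    | Sum.inr (Sum.inl ⟨_, j⟩) => if j = 0 then 2 else if j = 1 then 0 else 1
    | Sum.inr (Sum.inr (_, j)) => if j = 0 then 3 else if j = 1 then 1 else 0

/-!
A finite ranked tree is a Union tree iff it is saturated, i.e. every node of rank `r` has children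
of all the ranks `0, …, r - 1`: detaching the subtree at a highest-ranked child of the root leaves
two smaller saturated trees, whose merge is the tree. The Union-Find trees are the flattenings of
Union trees, obtained by moving nodes up to ancestors: a flattening of a merge differs from a merge
of flattenings only in nodes moved from depth two to the root, each of which a collapse can move.

Suppose that the flat tree is a flattening of a saturated tree `T`. In `T` every apple root and
every apple arm needs a leaf as a child, and the leaves that can serve lie in the apple itself or in
the basket that contains the apple in `T`. An apple of weight at least 1 needs more than its single
leaf, so it lies in a basket. A basket and its apples need `1 + ∑ (1 + a i)` leaves and have
`H + 1` leaves, plus one per apple, so that the weights of its apples add up to at most `H`. Since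
`H * k = ∑ a i`, equality holds in every basket. Conversely, a partition yields a saturated tree,
in which each basket contains its apples and `H` of its leaves lie below their arms.
-/

namespace PreTree

attribute [ext] PreTree

section Ancestors

variable {V W : Type} {t : PreTree V} {s : PreTree W} {x y z : V}

theorem Anc.refl (t : PreTree V) (x : V) : t.Anc x x := ⟨0, rfl⟩

theorem anc_parent_self (t : PreTree V) (x : V) : t.Anc (t.parent x) x := ⟨1, rfl⟩

theorem Anc.trans (hxy : t.Anc x y) (hyz : t.Anc y z) : t.Anc x z := by
  obtain ⟨k, rfl⟩ := hxy
  obtain ⟨l, rfl⟩ := hyz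
  exact ⟨k + l, Function.iterate_add_apply _ _ _ _⟩

theorem Anc.of_parent (h : t.Anc x (t.parent y)) : t.Anc x y :=
  h.trans (anc_parent_self t y)

theorem anc_iff_eq_or_anc_parent : t.Anc x y ↔ x = y ∨ t.Anc x (t.parent y) := by
  refine ⟨fun h => or_iff_not_imp_left.2 fun hne => anc_parent_of_ne h (Ne.symm hne), ?_⟩
  rintro (rfl | h)
  exacts [.refl t x, h.of_parent]

theorem Anc.induction {P : V → Prop} (h : t.Anc x y) (refl : P x)
    (step : ∀ z, t.Anc x (t.parent z) → P (t.parent z) → P z) : P y := by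
  obtain ⟨k, hk⟩ := h
  induction k generalizing y with
  | zero => exact (show y = x from hk) ▸ refl
  | succ n ih =>
    rw [Function.iterate_succ_apply] at hk
    exact step y ⟨n, hk⟩ (ih hk)

theorem Anc.map {f : V → W} (hf : ∀ z, s.Anc (f (t.parent z)) (f z)) (h : t.Anc x y) :
    s.Anc (f x) (f y) :=
  h.induction (P := fun y => s.Anc (f x) (f y)) (.refl s (f x)) fun z _ hz => hz.trans (hf z)

theorem anc_root_iff (h : t.parent t.root = t.root) : t.Anc x t.root ↔ x = t.root := by
  refine ⟨?_, fun hx => hx ▸ .refl t x⟩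
  rintro ⟨k, rfl⟩
  exact Function.iterate_fixed h k

end Ancestors

section Ranked

variable {V : Type} {t : PreTree V} {x y : V}

theorem IsRanked.parent_root (h : t.IsRanked) : t.parent t.root = t.root := h.1.1

theorem IsRanked.anc_root (h : t.IsRanked) (x : V) : t.Anc t.root x := h.1.2 x

theorem IsRanked.rank_lt (h : t.IsRanked) (hx : x ≠ t.root) : t.rank x < t.rank (t.parent x) :=
  h.2 x hx

theorem IsRanked.eq_or_rank_lt (h : t.IsRanked) (hxy : t.Anc x y) :
    x = y ∨ t.rank y < t.rank x := by
  refine hxy.induction (P := fun y => x = y ∨ t.rank y < t.rank x) (.inl rfl) fun z _ hz => ?_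
  by_cases hroot : z = t.root
  · rwa [hroot, h.parent_root, ← hroot] at hz
  · obtain rfl | hlt := hz
    exacts [.inr (h.rank_lt hroot), .inr ((h.rank_lt hroot).trans hlt)]

theorem IsRanked.rank_lt_root (h : t.IsRanked) (hx : x ≠ t.root) : t.rank x < t.rank t.root :=
  (h.eq_or_rank_lt (h.anc_root x)).resolve_left hx.symm

theorem IsRanked.of_rankDec [Finite V] (hroot : t.parent t.root = t.root) (hdec : t.RankDec) :
    t.IsRanked := by
  refine ⟨⟨hroot, fun x => ?_⟩, hdec⟩
  obtain ⟨M, hM⟩ := (Set.finite_range t.rank).bddAbove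
  have rank_le (x : V) : t.rank x ≤ M := hM ⟨x, rfl⟩
  induction hn : M - t.rank x using Nat.strong_induction_on generalizing x with
  | _ n ih =>
    by_cases hx : x = t.root
    · exact hx ▸ .refl t x
    · have hlt := hdec x hx
      have hle := rank_le (t.parent x)
      exact (ih _ (by omega) (t.parent x) rfl).of_parent

/-- Saturation: a node of rank `r` has children of all the ranks `0, …, r - 1`. Among finite ranked
trees, this characterizes the Union trees. -/
def IsSaturated (t : PreTree V) : Prop :=
  ∀ x, ∀ i < t.rank x, ∃ y, t.parent y = x ∧ t.rank y = i

/-- `t.IsFlattening T`: on the same ranked nodes, `t` is obtained from the tree `T` by reattaching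
each non-root node to one of its proper ancestors. The condition at the root says that the root
remains its own parent. -/
structure IsFlattening (t T : PreTree V) : Prop where
  root_eq : t.root = T.root
  rank_eq : t.rank = T.rank
  anc_parent : ∀ x, T.Anc (t.parent x) (T.parent x)

theorem IsFlattening.refl (t : PreTree V) : t.IsFlattening t :=
  ⟨rfl, rfl, fun x => .refl t (t.parent x)⟩

theorem IsFlattening.parent_root {T : PreTree V} (h : t.IsFlattening T)
    (hT : T.parent T.root = T.root) : t.parent t.root = t.root := by
  have := h.anc_parent T.root
  rw [hT, anc_root_iff hT] at this
  rwa [h.root_eq]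

theorem IsFlattening.collapse {T : PreTree V} (h : t.IsFlattening T) (hT : T.IsRanked) (x : V) :
    (t.collapse x).IsFlattening T where
  root_eq := h.root_eq
  rank_eq := h.rank_eq
  anc_parent y := by
    unfold PreTree.collapse
    dsimp only
    split_ifs
    exacts [h.root_eq ▸ hT.anc_root _, h.anc_parent y]

end Ranked

section Iso

variable {V W : Type} {t T : PreTree V} {s : PreTree W}

/-- Transport of a tree along a bijection of the nodes. -/
def map (e : V ≃ W) (t : PreTree V) : PreTree W where
  root := e t.root
  parent y := e (t.parent (e.symm y))
  rank y := t.rank (e.symm y)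

/-- A tree is isomorphic to its transport along a bijection. -/
def mapIso (e : V ≃ W) (t : PreTree V) : t.Iso (t.map e) where
  toEquiv := e
  map_root := rfl
  map_parent x := by simp [map]
  map_rank x := by simp [map]

theorem Iso.map_eq (e : t.Iso s) : t.map e.toEquiv = s := by
  ext y
  · exact e.map_root
  · simp [map, e.map_parent]
  · simp [map, ← e.map_rank]

/-- The inverse of an isomorphism of trees. -/
def Iso.symm (e : t.Iso s) : s.Iso t where
  toEquiv := e.toEquiv.symm
  map_root := by simp [← e.map_root]
  map_parent y := by simp [Equiv.symm_apply_eq, e.map_parent]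
  map_rank y := by simp [← e.map_rank]

theorem Iso.anc (e : t.Iso s) {x y : V} (h : t.Anc x y) : s.Anc (e.toEquiv x) (e.toEquiv y) :=
  h.map fun z => e.map_parent z ▸ anc_parent_self s (e.toEquiv z)

theorem Iso.isRanked (e : t.Iso s) (h : t.IsRanked) : s.IsRanked := by
  have forall_iff {p : W → Prop} := e.toEquiv.surjective.forall (p := p)
  refine ⟨⟨?_, forall_iff.2 fun x => ?_⟩, forall_iff.2 fun x hx => ?_⟩
  · rw [← e.map_root, ← e.map_parent, h.parent_root]
  · exact e.map_root ▸ e.anc (h.anc_root x)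
  · rw [← e.map_parent, e.map_rank, e.map_rank]
    exact h.rank_lt fun hroot => hx (hroot ▸ e.map_root)

theorem Iso.isSaturated (e : t.Iso s) (h : t.IsSaturated) : s.IsSaturated := by
  refine e.toEquiv.surjective.forall.2 fun x i hi => ?_
  obtain ⟨y, hy, hyi⟩ := h x i (e.map_rank x ▸ hi)
  exact ⟨e.toEquiv y, by rw [← e.map_parent, hy], by rw [e.map_rank, hyi]⟩

theorem IsFlattening.map (e : V ≃ W) (h : t.IsFlattening T) :
    (t.map e).IsFlattening (T.map e) where
  root_eq := congrArg e h.root_eq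
  rank_eq := congrArg (· ∘ e.symm) h.rank_eq
  anc_parent y := (T.mapIso e).anc (h.anc_parent (e.symm y))

end Iso

section Merge

variable {V W : Type} {t T : PreTree V} {s S : PreTree W}

@[simp]
theorem merge_root (t : PreTree V) (s : PreTree W) : (t.merge s).root = Sum.inl t.root := rfl

@[simp]
theorem merge_parent_inl (t : PreTree V) (s : PreTree W) (v : V) :
    (t.merge s).parent (Sum.inl v) = Sum.inl (t.parent v) := rfl

@[simp]
theorem merge_parent_inr_root (t : PreTree V) (s : PreTree W) :
    (t.merge s).parent (Sum.inr s.root) = Sum.inl t.root := if_pos rfl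

theorem merge_parent_inr_of_ne (t : PreTree V) {w : W} (hw : w ≠ s.root) :
    (t.merge s).parent (Sum.inr w) = Sum.inr (s.parent w) := if_neg hw

theorem merge_rank_inl (t : PreTree V) (s : PreTree W) (v : V) :
    (t.merge s).rank (Sum.inl v) =
      if v = t.root ∧ t.rank t.root = s.rank s.root then t.rank v + 1 else t.rank v := rfl

@[simp]
theorem merge_rank_inr (t : PreTree V) (s : PreTree W) (w : W) :
    (t.merge s).rank (Sum.inr w) = s.rank w := rfl

theorem Anc.merge_inl {x y : V} (h : t.Anc x y) (s : PreTree W) :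
    (t.merge s).Anc (Sum.inl x) (Sum.inl y) :=
  h.map fun z => anc_parent_self (t.merge s) (Sum.inl z)

theorem Anc.merge_inr {x y : W} (h : s.Anc x y) (hs : s.parent s.root = s.root)
    (t : PreTree V) : (t.merge s).Anc (Sum.inr x) (Sum.inr y) := by
  refine h.map fun z => ?_
  by_cases hz : z = s.root
  · rw [hz, hs]
    exact .refl _ _
  · rw [← merge_parent_inr_of_ne t hz]
    exact anc_parent_self _ _

theorem exists_anc_of_anc_merge_inl {z : V ⊕ W} {v : V} (h : (t.merge s).Anc z (Sum.inl v)) :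
    ∃ v', z = Sum.inl v' ∧ t.Anc v' v := by
  suffices ∀ y, (t.merge s).Anc z y → ∀ v, y = Sum.inl v →
      ∃ v', z = Sum.inl v' ∧ t.Anc v' v from this _ h v rfl
  intro y hy
  refine hy.induction (P := fun y => ∀ v, y = Sum.inl v → ∃ v', z = Sum.inl v' ∧ t.Anc v' v)
    (fun v hv => ⟨v, hv, .refl t v⟩) ?_
  rintro _ - ih v rfl
  obtain ⟨v', hz, hv'⟩ := ih _ rfl
  exact ⟨v', hz, hv'.of_parent⟩

theorem eq_root_or_exists_anc_of_anc_merge_inr (ht : t.parent t.root = t.root) {z : V ⊕ W} {w : W}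
    (h : (t.merge s).Anc z (Sum.inr w)) :
    z = Sum.inl t.root ∨ ∃ w', z = Sum.inr w' ∧ s.Anc w' w := by
  suffices ∀ y, (t.merge s).Anc z y → ∀ w, y = Sum.inr w →
      z = Sum.inl t.root ∨ ∃ w', z = Sum.inr w' ∧ s.Anc w' w from this _ h w rfl
  intro y hy
  refine hy.induction (P := fun y => ∀ w, y = Sum.inr w →
    z = Sum.inl t.root ∨ ∃ w', z = Sum.inr w' ∧ s.Anc w' w) (fun w hw => .inr ⟨w, hw, .refl s w⟩) ?_
  rintro _ hanc ih w rfl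
  by_cases hw : w = s.root
  · rw [hw, merge_parent_inr_root, ← merge_root t s] at hanc
    exact .inl ((anc_root_iff (by simp [ht])).1 hanc)
  · refine (ih _ (merge_parent_inr_of_ne t hw)).imp_right ?_
    rintro ⟨w', hz, hw'⟩
    exact ⟨w', hz, hw'.of_parent⟩

theorem IsRanked.merge (ht : t.IsRanked) (hs : s.IsRanked)
    (hrank : s.rank s.root ≤ t.rank t.root) : (t.merge s).IsRanked := by
  refine ⟨⟨by simp [ht.parent_root], ?_⟩, ?_⟩
  · rintro (v | w)
    · exact (ht.anc_root v).merge_inl s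
    · exact .trans ⟨1, merge_parent_inr_root t s⟩ ((hs.anc_root w).merge_inr hs.parent_root t)
  · rintro (v | w) hz
    · have hv : v ≠ t.root := fun hv => hz (congrArg Sum.inl hv)
      have hlt := ht.rank_lt hv
      rw [merge_parent_inl, merge_rank_inl, merge_rank_inl, if_neg fun h => hv h.1]
      split_ifs <;> omega
    · by_cases hw : w = s.root
      · rw [hw, merge_parent_inr_root, merge_rank_inr, merge_rank_inl]
        split_ifs <;> grind
      · rw [merge_parent_inr_of_ne t hw]
        exact hs.rank_lt hw

theorem IsSaturated.exists_ne_root (h : t.IsSaturated) (hroot : t.parent t.root = t.root) {x : V}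
    {i : ℕ} (hi : i < t.rank x) : ∃ y ≠ t.root, t.parent y = x ∧ t.rank y = i := by
  obtain ⟨y, hyx, hyi⟩ := h x i hi
  exact ⟨y, by grind, hyx, hyi⟩

theorem IsSaturated.merge (ht : t.IsSaturated) (hs : s.IsSaturated)
    (htroot : t.parent t.root = t.root) (hsroot : s.parent s.root = s.root) :
    (t.merge s).IsSaturated := by
  have saturated_inl (v : V) (i : ℕ) (hi : i < t.rank v) :
      ∃ z, (t.merge s).parent z = Sum.inl v ∧ (t.merge s).rank z = i := by
    obtain ⟨y, hy, hyv, hyi⟩ := ht.exists_ne_root htroot hi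
    exact ⟨Sum.inl y, by simp [hyv], by simp [merge_rank_inl, hy, hyi]⟩
  rintro (v | w) i hi
  · rw [merge_rank_inl] at hi
    split_ifs at hi with hv
    · obtain hlt | rfl := Nat.lt_succ_iff_lt_or_eq.1 hi
      · exact saturated_inl v i hlt
      · exact ⟨Sum.inr s.root, by simp [hv.1], by simp [hv.1, hv.2]⟩
    · exact saturated_inl v i hi
  · obtain ⟨y, hy, hyw, hyi⟩ := hs.exists_ne_root hsroot hi
    exact ⟨Sum.inr y, by rw [merge_parent_inr_of_ne t hy, hyw], hyi⟩

theorem IsFlattening.merge (ht : t.IsFlattening T) (hs : s.IsFlattening S)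
    (hS : S.parent S.root = S.root) : (t.merge s).IsFlattening (T.merge S) where
  root_eq := congrArg Sum.inl ht.root_eq
  rank_eq := by simp [PreTree.merge, ht.root_eq, ht.rank_eq, hs.root_eq, hs.rank_eq]
  anc_parent := by
    rintro (v | w)
    · exact (ht.anc_parent v).merge_inl S
    · by_cases hw : w = S.root
      · rw [hw, merge_parent_inr_root, ← hs.root_eq, merge_parent_inr_root, ht.root_eq]
        exact .refl _ _
      · rw [merge_parent_inr_of_ne T hw, merge_parent_inr_of_ne t (hs.root_eq ▸ hw)]
        exact (hs.anc_parent w).merge_inr hS T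

theorem IsFlattening.exists_merge {t : PreTree (V ⊕ W)}
    (h : t.IsFlattening (T.merge S)) (hT : T.parent T.root = T.root) (hS : S.IsRanked) :
    ∃ (t' : PreTree V) (s' : PreTree W), t'.IsFlattening T ∧ s'.IsFlattening S ∧
      ∀ z, t.parent z = (t'.merge s').parent z ∨
        t.parent z = Sum.inl T.root ∧
          (t'.merge s').parent ((t'.merge s').parent z) = Sum.inl T.root := by
  have parent_inl (v : V) : ∃ v', t.parent (Sum.inl v) = Sum.inl v' ∧ T.Anc v' (T.parent v) :=
    exists_anc_of_anc_merge_inl (h.anc_parent (Sum.inl v))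
  have parent_inr (w : W) : ∃ w', S.Anc w' (S.parent w) ∧
      (t.parent (Sum.inr w) = Sum.inr w' ∧ w ≠ S.root ∨
        t.parent (Sum.inr w) = Sum.inl T.root ∧ w' = S.root) := by
    have hanc := h.anc_parent (Sum.inr w)
    by_cases hw : w = S.root
    · rw [hw, merge_parent_inr_root, ← merge_root T S, anc_root_iff (by simp [hT])] at hanc
      exact ⟨S.root, hS.anc_root _, .inr ⟨hw ▸ hanc, rfl⟩⟩
    · rw [merge_parent_inr_of_ne T hw] at hanc
      obtain hroot | ⟨w', hw', hanc'⟩ := eq_root_or_exists_anc_of_anc_merge_inr hT hanc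
      exacts [⟨S.root, hS.anc_root _, .inr ⟨hroot, rfl⟩⟩, ⟨w', hanc', .inl ⟨hw', hw⟩⟩]
  choose p hp hpT using parent_inl
  choose q hqS hq using parent_inr
  refine ⟨⟨T.root, p, T.rank⟩, ⟨S.root, q, S.rank⟩, ⟨rfl, rfl, hpT⟩, ⟨rfl, rfl, hqS⟩, ?_⟩
  rintro (v | w)
  · exact .inl (hp v)
  · obtain ⟨hw', hw⟩ | ⟨hroot, hqw⟩ := hq w
    · exact .inl (hw'.trans (merge_parent_inr_of_ne (s := ⟨S.root, q, S.rank⟩) _ hw).symm)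
    · refine .inr ⟨hroot, ?_⟩
      by_cases hw : w = S.root
      · have hp_root : p T.root = T.root := by simpa [hT, anc_root_iff] using hpT T.root
        simp [PreTree.merge, hw, hp_root]
      · simp [PreTree.merge, hw, hqw]

end Merge

section Peel

variable {V : Type} {t : PreTree V} {c : V} {r : ℕ}

/-- The tree left after detaching the subtree of `t` at `c`, with the root given the rank `r`. -/
noncomputable def prune (t : PreTree V) (c : V) (hc : ¬ t.Anc c t.root) (r : ℕ) :
    PreTree {y : V // ¬ t.Anc c y} where
  root := ⟨t.root, hc⟩
  parent y := ⟨t.parent y, fun h => y.2 h.of_parent⟩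
  rank y := if (y : V) = t.root then r else t.rank y

theorem prune_rank_of_ne {hc : ¬ t.Anc c t.root} {y : {y : V // ¬ t.Anc c y}}
    (hy : (y : V) ≠ t.root) : (t.prune c hc r).rank y = t.rank y := if_neg hy

theorem IsRanked.prune [Finite V] (ht : t.IsRanked) (hc : ¬ t.Anc c t.root)
    (hr : ∀ x, x ≠ t.root → x ≠ c → t.parent x = t.root → t.rank x < r) :
    (t.prune c hc r).IsRanked := by
  refine .of_rankDec (Subtype.ext ht.parent_root) fun x hx => ?_
  have hxroot : (x : V) ≠ t.root := fun h => hx (Subtype.ext h)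
  have hxc : (x : V) ≠ c := fun h => x.2 (h.symm ▸ .refl t c)
  rw [prune_rank_of_ne hxroot]
  by_cases hpar : t.parent x = t.root
  · simpa [PreTree.prune, hpar] using hr x hxroot hxc hpar
  · rw [prune_rank_of_ne hpar]
    exact ht.rank_lt hxroot

theorem IsSaturated.prune (hs : t.IsSaturated) (hroot : t.parent t.root = t.root)
    (hc : ¬ t.Anc c t.root) (hcroot : t.parent c = t.root)
    (hr : ∀ i < r, ∃ y ≠ t.root, y ≠ c ∧ t.parent y = t.root ∧ t.rank y = i) :
    (t.prune c hc r).IsSaturated := by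
  rintro ⟨x, hx⟩ i hi
  obtain ⟨y, hy, hyc, hyx, hyi⟩ :
      ∃ y ≠ t.root, y ≠ c ∧ t.parent y = x ∧ t.rank y = i := by
    by_cases hxroot : x = t.root
    · simpa [hxroot] using hr i (by simpa [PreTree.prune, hxroot] using hi)
    · rw [prune_rank_of_ne hxroot] at hi
      obtain ⟨y, hy, hyx, hyi⟩ := hs.exists_ne_root hroot hi
      exact ⟨y, hy, fun hyc => hxroot (by rw [← hcroot, ← hyc, hyx]), hyx, hyi⟩
  have hcy : ¬ t.Anc c y := fun h => hx (hyx ▸ anc_parent_of_ne h hyc)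
  exact ⟨⟨y, hcy⟩, Subtype.ext hyx, by rw [prune_rank_of_ne hy, hyi]⟩

theorem coe_subtree_parent_of_ne {y : {y : V // t.Anc c y}} (hy : (y : V) ≠ c) :
    ((t.subtree c).parent y : V) = t.parent y := by
  simp [PreTree.subtree, hy]

theorem IsRanked.subtree [Finite V] (ht : t.IsRanked) (c : V) : (t.subtree c).IsRanked := by
  refine .of_rankDec (by simp [PreTree.subtree]) fun x hx => ?_
  have hxc : (x : V) ≠ c := fun h => hx (Subtype.ext h)
  have hxroot : (x : V) ≠ t.root := fun h =>
    hxc (h.trans ((anc_root_iff ht.parent_root).1 (h ▸ x.2)).symm)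
  change t.rank x < t.rank ((t.subtree c).parent x)
  rw [coe_subtree_parent_of_ne hxc]
  exact ht.rank_lt hxroot

theorem IsSaturated.subtree (hs : t.IsSaturated) (ht : t.IsRanked) (c : V) :
    (t.subtree c).IsSaturated := by
  rintro ⟨x, hx⟩ i hi
  obtain ⟨y, hyx, hyi⟩ := hs x i hi
  have hyc : y ≠ c := by
    rintro rfl
    have hlt : t.rank y < t.rank x := hyi ▸ hi
    grind [ht.eq_or_rank_lt hx]
  exact ⟨⟨y, (hyx ▸ hx : t.Anc c (t.parent y)).of_parent⟩,
    Subtype.ext ((coe_subtree_parent_of_ne hyc).trans hyx), hyi⟩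

/-- A tree is recovered by merging back the subtree at a child of the root. -/
noncomputable def mergePruneSubtreeIso (hc : ¬ t.Anc c t.root) (hcroot : t.parent c = t.root)
    (hr : (if r = t.rank c then r + 1 else r) = t.rank t.root) :
    ((t.prune c hc r).merge (t.subtree c)).Iso t where
  toEquiv := (Equiv.sumComm _ _).trans (Equiv.sumCompl (t.Anc c))
  map_root := rfl
  map_parent := by
    rintro (x | ⟨x, hx⟩)
    · rfl
    · by_cases hxc : x = c
      · subst hxc
        exact (congrArg _ (merge_parent_inr_root _ (t.subtree x))).trans hcroot.symm
      · rw [merge_parent_inr_of_ne _ fun h => hxc (congrArg Subtype.val h)]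
        exact coe_subtree_parent_of_ne hxc
  map_rank := by
    rintro (⟨x, hx⟩ | x)
    · by_cases hxroot : x = t.root
      · subst hxroot
        simpa [merge_rank_inl, PreTree.prune, PreTree.subtree] using hr.symm
      · simp [merge_rank_inl, PreTree.prune, hxroot]
    · rfl

-- The rank `r` of the root before merging `c` is the current one if the root has another child of
-- the same rank as `c`, and the rank of `c` otherwise.
theorem IsSaturated.exists_last_child (hs : t.IsSaturated) (ht : t.IsRanked)
    (h0 : t.rank t.root ≠ 0) :
    ∃ c ≠ t.root, t.parent c = t.root ∧ ∃ r, t.rank c ≤ r ∧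
      (if r = t.rank c then r + 1 else r) = t.rank t.root ∧
      (∀ x, x ≠ t.root → x ≠ c → t.parent x = t.root → t.rank x < r) ∧
      ∀ i < r, ∃ y ≠ t.root, y ≠ c ∧ t.parent y = t.root ∧ t.rank y = i := by
  obtain ⟨c, hc, hcroot, hcrank⟩ :=
    hs.exists_ne_root ht.parent_root (x := t.root) (i := t.rank t.root - 1) (by omega)
  have exists_child (i : ℕ) (hi : i < t.rank c) :
      ∃ y ≠ t.root, y ≠ c ∧ t.parent y = t.root ∧ t.rank y = i := by
    obtain ⟨y, hy, hyroot, hyi⟩ := hs.exists_ne_root ht.parent_root (hi.trans (ht.rank_lt_root hc))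
    exact ⟨y, hy, by grind, hyroot, hyi⟩
  refine ⟨c, hc, hcroot, ?_⟩
  by_cases htwin : ∃ y ≠ t.root, y ≠ c ∧ t.parent y = t.root ∧ t.rank y = t.rank c
  · refine ⟨t.rank t.root, by omega, if_neg (by omega), fun x hx _ _ => ht.rank_lt_root hx,
      fun i hi => ?_⟩
    obtain hlt | rfl : i < t.rank c ∨ i = t.rank c := by omega
    exacts [exists_child i hlt, htwin]
  · refine ⟨t.rank c, le_rfl, by rw [if_pos rfl]; omega, fun x hx hxc hxroot => ?_, exists_child⟩
    have hlt := ht.rank_lt_root hx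
    have hne : t.rank x ≠ t.rank c := fun h => htwin ⟨x, hx, hxc, hxroot, h⟩
    omega

end Peel

section Reattach

variable {V : Type} {t : PreTree V} {x : V}

theorem collapse_eq_push (hroot : t.parent t.root = t.root)
    (hx : t.parent (t.parent x) = t.root) : t.collapse x = t.push x t.root := by
  ext y
  · rfl
  · have anc_iff : t.Anc y x ↔ y = x ∨ y = t.parent x ∨ y = t.root := by
      rw [anc_iff_eq_or_anc_parent, anc_iff_eq_or_anc_parent (y := t.parent x), hx,
        anc_root_iff hroot]
    simp only [PreTree.collapse, push, Function.update_apply, anc_iff]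
    grind
  · rfl

end Reattach

end PreTree

section UnionTrees

variable {V : Type} {t : PreTree V}

theorem IsUnion.finite (h : IsUnion t) : Finite V := by
  induction h with
  | singleton t h1 _ => exact @Finite.of_subsingleton _ ⟨fun x y => (h1 x).trans (h1 y).symm⟩
  | merge => exact inferInstance
  | iso _ _ _ hi => exact .of_equiv _ hi.some.toEquiv

theorem IsUnion.isRanked (h : IsUnion t) : t.IsRanked := by
  induction h with
  | singleton t h1 _ =>
    exact ⟨⟨h1 _, fun x => h1 x ▸ .refl t t.root⟩, fun x hx => absurd (h1 x) hx⟩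
  | merge _ _ _ _ hr iht ihs => exact iht.merge ihs hr
  | iso _ _ _ hi ih => exact hi.some.isRanked ih

theorem IsUnion.isSaturated (h : IsUnion t) : t.IsSaturated := by
  induction h with
  | singleton t h1 h2 => exact fun x i hi => absurd hi (by simp [h1 x, h2])
  | merge _ _ ht hs _ iht ihs => exact iht.merge ihs ht.isRanked.parent_root hs.isRanked.parent_root
  | iso _ _ _ hi ih => exact hi.some.isSaturated ih

theorem PreTree.IsSaturated.isUnion [Finite V] (hs : t.IsSaturated) (ht : t.IsRanked) :
    IsUnion t := by
  induction hn : Nat.card V using Nat.strong_induction_on generalizing V with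
  | _ n ih =>
    by_cases h0 : t.rank t.root = 0
    · refine .singleton t (fun x => by_contra fun hx => ?_) h0
      exact absurd (ht.rank_lt_root hx) (by omega)
    obtain ⟨c, hc, hcroot, r, hcr, hr, hlt, hchild⟩ := hs.exists_last_child ht h0
    have hanc : ¬ t.Anc c t.root := fun h => hc ((anc_root_iff ht.parent_root).1 h)
    have union_prune : IsUnion (t.prune c hanc r) :=
      ih _ (hn ▸ Finite.card_subtype_lt (not_not.2 (.refl t c)))
        (hs.prune ht.parent_root hanc hcroot hchild) (ht.prune hanc hlt) rfl
    have union_subtree : IsUnion (t.subtree c) :=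
      ih _ (hn ▸ Finite.card_subtype_lt hanc) (hs.subtree ht c) (ht.subtree c) rfl
    refine .iso _ _ (.merge _ _ union_prune union_subtree ?_) ⟨mergePruneSubtreeIso hanc hcroot hr⟩
    simpa [PreTree.prune, PreTree.subtree] using hcr

end UnionTrees

section UnionFindTrees

variable {V : Type} {t T : PreTree V}

theorem IsUnionFind.exists_isFlattening (h : IsUnionFind t) :
    ∃ T, IsUnion T ∧ t.IsFlattening T := by
  induction h with
  | singleton t h1 h2 => exact ⟨t, .singleton t h1 h2, .refl t⟩
  | merge t s _ _ hr iht ihs =>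
    obtain ⟨T, hT, htT⟩ := iht
    obtain ⟨S, hS, hsS⟩ := ihs
    rw [htT.rank_eq, htT.root_eq, hsS.rank_eq, hsS.root_eq] at hr
    exact ⟨T.merge S, .merge T S hT hS hr, htT.merge hsS hS.isRanked.parent_root⟩
  | collapse t x _ ih =>
    obtain ⟨T, hT, htT⟩ := ih
    exact ⟨T, hT, htT.collapse hT.isRanked x⟩
  | iso t s _ hi ih =>
    obtain ⟨T, hT, htT⟩ := ih
    obtain ⟨e⟩ := hi
    have hflat := htT.map e.toEquiv
    rw [e.map_eq] at hflat
    exact ⟨T.map e.toEquiv, .iso _ _ hT ⟨T.mapIso e.toEquiv⟩, hflat⟩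

theorem IsUnionFind.parent_root (h : IsUnionFind t) : t.parent t.root = t.root := by
  obtain ⟨T, hT, htT⟩ := h.exists_isFlattening
  exact htT.parent_root hT.isRanked.parent_root

theorem IsUnionFind.reattach_root (h : IsUnionFind t) (A : Finset V)
    (hA : ∀ x ∈ A, t.parent (t.parent x) = t.root) :
    IsUnionFind ⟨t.root, A.piecewise (fun _ => t.root) t.parent, t.rank⟩ := by
  induction A using Finset.induction_on with
  | empty => simpa using h
  | insert x A hxA ih =>
    specialize ih fun y hy => hA y (Finset.mem_insert_of_mem hy)
    have hx := hA x (Finset.mem_insert_self x A)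
    rw [Finset.piecewise_insert]
    convert ih.collapse _ x using 1
    refine (collapse_eq_push ih.parent_root ?_).symm
    change A.piecewise (fun _ => t.root) t.parent
      (A.piecewise (fun _ => t.root) t.parent x) = t.root
    rw [Finset.piecewise_eq_of_notMem _ _ _ hxA]
    by_cases hxp : t.parent x ∈ A <;> simp [hxp, hx]

theorem IsUnionFind.of_parent_eq_or_root [Finite V] {s : PreTree V} (h : IsUnionFind t)
    (hroot : s.root = t.root) (hrank : s.rank = t.rank)
    (hparent : ∀ x, s.parent x = t.parent x ∨
      s.parent x = t.root ∧ t.parent (t.parent x) = t.root) : IsUnionFind s := by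
  have := Fintype.ofFinite V
  convert h.reattach_root (Finset.univ.filter fun x => s.parent x ≠ t.parent x)
    fun x hx => ((hparent x).resolve_left (Finset.mem_filter.1 hx).2).2 using 1
  ext x
  · exact hroot
  · by_cases hx : s.parent x = t.parent x
    · simp [hx]
    · simpa [Finset.piecewise, hx] using ((hparent x).resolve_left hx).1
  · exact congrFun hrank x

theorem IsUnion.isUnionFind_of_isFlattening (hT : IsUnion T) (h : t.IsFlattening T) :
    IsUnionFind t := by
  induction hT with
  | singleton T h1 h2 =>
    exact .singleton t (fun x => by rw [h.root_eq, ← h1 x]) (by rw [h.root_eq, h.rank_eq, h2])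
  | merge T S hT hS hr ihT ihS =>
    have := hT.finite
    have := hS.finite
    obtain ⟨t', s', ht', hs', hparent⟩ := h.exists_merge hT.isRanked.parent_root hS.isRanked
    have hflat := ht'.merge hs' hS.isRanked.parent_root
    have hr' : s'.rank s'.root ≤ t'.rank t'.root := by
      rwa [ht'.root_eq, ht'.rank_eq, hs'.root_eq, hs'.rank_eq]
    refine (IsUnionFind.merge t' s' (ihT ht') (ihS hs') hr').of_parent_eq_or_root
      (h.root_eq.trans hflat.root_eq.symm) (h.rank_eq.trans hflat.rank_eq.symm) fun z => ?_
    rw [hflat.root_eq]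
    exact hparent z
  | iso T₀ T _ hi ih =>
    obtain ⟨e⟩ := hi
    have hflat := h.map e.symm.toEquiv
    rw [e.symm.map_eq] at hflat
    exact .iso _ _ (ih hflat) ⟨(t.mapIso e.symm.toEquiv).symm⟩

theorem isUnionFind_iff_exists_isFlattening :
    IsUnionFind t ↔ ∃ T, IsUnion T ∧ t.IsFlattening T :=
  ⟨IsUnionFind.exists_isFlattening, fun ⟨_, hT, h⟩ => hT.isUnionFind_of_isFlattening h⟩

end UnionFindTrees

/-- The nodes of the flat tree with `k` baskets of size `H` and apples of weights `a`. The fillers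
are the nodes lying neither in apples nor in baskets, named by the ranks on their path from the
root. The arms of apples and baskets are their nodes of rank 1. -/
inductive FlatNode (k H : ℕ) {m : ℕ} (a : Fin m → ℕ) : Type
  | root
  | filler0
  | filler1
  | filler10
  | filler2
  | filler20
  | filler21
  | filler210
  | appleRoot (i : Fin m)
  | appleLeaf (i : Fin m)
  | appleArm (i : Fin m) (l : Fin (a i))
  | basketRoot (b : Fin k)
  | basketArm (b : Fin k)
  | basketArmLeaf (b : Fin k)
  | basketLeaf (b : Fin k) (l : Fin (H + 1))

namespace FlatNode

variable {k H m : ℕ} {a : Fin m → ℕ}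

/-- The rank of a node in the flat tree. -/
def rank : FlatNode k H a → ℕ
  | root => 4
  | basketRoot _ => 3
  | filler2 | appleRoot _ => 2
  | filler1 | filler21 | appleArm _ _ | basketArm _ => 1
  | filler0 | filler10 | filler20 | filler210 | appleLeaf _ | basketArmLeaf _ | basketLeaf _ _ => 0

/-- The parent of a node in the flat tree. -/
def parent : FlatNode k H a → FlatNode k H a
  | root | filler0 | filler1 | filler2 | appleRoot _ | basketRoot _ => root
  | filler10 => filler1
  | filler20 | filler21 => filler2
  | filler210 => filler21
  | appleLeaf i | appleArm i _ => appleRoot i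
  | basketArm b | basketLeaf b _ => basketRoot b
  | basketArmLeaf b => basketArm b

/-- The correspondence between named nodes and the numbered nodes of `flatTree`. -/
def equiv : FlatNode k H a ≃ Fin 8 ⊕ (Σ i : Fin m, Fin (a i + 2)) ⊕ (Fin k × Fin (H + 4)) where
  toFun
    | root => .inl 0
    | filler0 => .inl 1
    | filler1 => .inl 2
    | filler10 => .inl 3
    | filler2 => .inl 4
    | filler20 => .inl 5
    | filler21 => .inl 6
    | filler210 => .inl 7
    | appleRoot i => .inr (.inl ⟨i, 0⟩)
    | appleLeaf i => .inr (.inl ⟨i, 1⟩)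
    | appleArm i l => .inr (.inl ⟨i, l.succ.succ⟩)
    | basketRoot b => .inr (.inr (b, 0))
    | basketArm b => .inr (.inr (b, 1))
    | basketArmLeaf b => .inr (.inr (b, 2))
    | basketLeaf b l => .inr (.inr (b, l.succ.succ.succ))
  invFun
    | .inl 0 => root
    | .inl 1 => filler0
    | .inl 2 => filler1
    | .inl 3 => filler10
    | .inl 4 => filler2
    | .inl 5 => filler20
    | .inl 6 => filler21
    | .inl 7 => filler210
    | .inr (.inl ⟨i, ⟨0, _⟩⟩) => appleRoot i
    | .inr (.inl ⟨i, ⟨1, _⟩⟩) => appleLeaf i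
    | .inr (.inl ⟨i, ⟨l + 2, h⟩⟩) => appleArm i ⟨l, by omega⟩
    | .inr (.inr (b, ⟨0, _⟩)) => basketRoot b
    | .inr (.inr (b, ⟨1, _⟩)) => basketArm b
    | .inr (.inr (b, ⟨2, _⟩)) => basketArmLeaf b
    | .inr (.inr (b, ⟨l + 3, h⟩)) => basketLeaf b ⟨l, by omega⟩
  left_inv x := by cases x <;> rfl
  right_inv := by
    rintro (i | ⟨i, _ | _ | l, hl⟩ | ⟨b, _ | _ | _ | l, hl⟩)
    · fin_cases i <;> rfl
    all_goals rfl

theorem eq_filler0 {x : FlatNode k H a} (hrank : x.rank = 0) (hparent : x.parent = root) :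
    x = filler0 := by
  cases x <;> simp_all [rank, parent]

theorem eq_appleLeaf {x : FlatNode k H a} {i : Fin m} (hrank : x.rank = 0)
    (hparent : x.parent = appleRoot i) : x = appleLeaf i := by
  cases x <;> simp_all [rank, parent]

theorem exists_eq_basketLeaf {x : FlatNode k H a} {b : Fin k} (hrank : x.rank = 0)
    (hparent : x.parent = basketRoot b) : ∃ l, x = basketLeaf b l := by
  cases x <;> simp_all [rank, parent]

theorem parent_ne_appleArm (x : FlatNode k H a) (i : Fin m) (l : Fin (a i)) :
    x.parent ≠ appleArm i l := by
  cases x <;> nofun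

theorem eq_root_of_three_lt_rank {x : FlatNode k H a} (hrank : 3 < x.rank) : x = root := by
  cases x <;> simp_all [rank]

theorem eq_root_or_eq_basketRoot_of_two_lt_rank {x : FlatNode k H a} (hrank : 2 < x.rank) :
    x = root ∨ ∃ b, x = basketRoot b := by
  cases x <;> simp_all [rank]

instance : Finite (FlatNode k H a) := .of_equiv _ equiv.symm

end FlatNode

/-- The flat tree, on named nodes. -/
def flatModel (k H : ℕ) {m : ℕ} (a : Fin m → ℕ) : PreTree (FlatNode k H a) :=
  ⟨.root, FlatNode.parent, FlatNode.rank⟩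

/-- The model on named nodes is the flat tree. -/
noncomputable def flatModelIso (k H : ℕ) {m : ℕ} (a : Fin m → ℕ) :
    (flatModel k H a).Iso (flatTree k H m a) where
  toEquiv := FlatNode.equiv
  map_root := rfl
  map_parent x := by cases x <;> rfl
  map_rank x := by cases x <;> rfl

section Packing

variable {k H m : ℕ} {a : Fin m → ℕ} {B : Fin m → Fin k}

theorem card_sigma_fiber {ι κ : Type*} [Fintype ι] [DecidableEq κ] (a : ι → ℕ) (B : ι → κ)
    (j : κ) :
    Fintype.card {p : Σ i, Fin (a i) // B p.1 = j} =
      ∑ i ∈ Finset.univ.filter (fun i => B i = j), a i :=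
  calc Fintype.card {p : Σ i, Fin (a i) // B p.1 = j}
    _ = Fintype.card (Σ i : {i // B i = j}, Fin (a i)) :=
      Fintype.card_congr (Equiv.subtypeSigmaEquiv (fun i => Fin (a i)) (B · = j))
    _ = ∑ i : {i // B i = j}, a i := by simp
    _ = ∑ i ∈ Finset.univ.filter (fun i => B i = j), a i :=
      (Finset.sum_subtype _ (by simp) a).symm

/-- The tree packing each apple `i` into the basket `B i`, in which each basket `b` keeps its leaf
`0` and gives its other `H` leaves to the arms of its apples, according to the bijection `g b`. -/
def packedTree (g : ∀ b, Fin H ≃ {p : Σ i, Fin (a i) // B p.1 = b}) :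
    PreTree (FlatNode k H a) where
  root := .root
  rank := FlatNode.rank
  parent
    | .appleRoot i => .basketRoot (B i)
    | .basketLeaf b l => Fin.cases (.basketRoot b) (fun l => .appleArm (g b l).1.1 (g b l).1.2) l
    | x => x.parent

variable (g : ∀ b, Fin H ≃ {p : Σ i, Fin (a i) // B p.1 = b})

theorem packedTree_isRanked : (packedTree g).IsRanked := by
  refine .of_rankDec rfl fun x hx => ?_
  cases x with
  | root => exact absurd rfl hx
  | basketLeaf b l => cases l using Fin.cases <;> simp [packedTree, FlatNode.rank]
  | _ => simp [packedTree, FlatNode.parent, FlatNode.rank]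

theorem packedTree_isSaturated (hk : 0 < k) (hH : 0 < H) (ha : ∀ i, 1 ≤ a i) :
    (packedTree g).IsSaturated := by
  intro x r hr
  change r < x.rank at hr
  cases x with
  | root =>
    change r < 4 at hr
    interval_cases r
    exacts [⟨.filler0, rfl, rfl⟩, ⟨.filler1, rfl, rfl⟩, ⟨.filler2, rfl, rfl⟩,
      ⟨.basketRoot ⟨0, hk⟩, rfl, rfl⟩]
  | filler1 => exact ⟨.filler10, rfl, (Nat.lt_one_iff.1 hr).symm⟩
  | filler2 =>
    change r < 2 at hr
    interval_cases r
    exacts [⟨.filler20, rfl, rfl⟩, ⟨.filler21, rfl, rfl⟩]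
  | filler21 => exact ⟨.filler210, rfl, (Nat.lt_one_iff.1 hr).symm⟩
  | appleRoot i =>
    change r < 2 at hr
    interval_cases r
    exacts [⟨.appleLeaf i, rfl, rfl⟩, ⟨.appleArm i ⟨0, ha i⟩, rfl, rfl⟩]
  | appleArm i l =>
    have hgl := (g (B i)).apply_symm_apply ⟨⟨i, l⟩, rfl⟩
    exact ⟨.basketLeaf (B i) ((g (B i)).symm ⟨⟨i, l⟩, rfl⟩).succ,
      congrArg (fun p : {p : Σ i, Fin (a i) // B p.1 = B i} => FlatNode.appleArm p.1.1 p.1.2) hgl,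
      (Nat.lt_one_iff.1 hr).symm⟩
  | basketRoot b =>
    change r < 3 at hr
    interval_cases r
    exacts [⟨.basketLeaf b 0, rfl, rfl⟩, ⟨.basketArm b, rfl, rfl⟩,
      ⟨.appleRoot (g b ⟨0, hH⟩).1.1, congrArg FlatNode.basketRoot (g b ⟨0, hH⟩).2, rfl⟩]
  | basketArm b => exact ⟨.basketArmLeaf b, rfl, (Nat.lt_one_iff.1 hr).symm⟩
  | _ => exact absurd hr (Nat.not_lt_zero r)

theorem flatModel_isFlattening_packedTree : (flatModel k H a).IsFlattening (packedTree g) where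
  root_eq := rfl
  rank_eq := rfl
  anc_parent x := by
    cases x with
    | appleRoot i => exact (packedTree_isRanked g).anc_root _
    | basketLeaf b l =>
      cases l using Fin.cases with
      | zero => exact .refl _ _
      | succ l => exact ⟨2, congrArg FlatNode.basketRoot (g b l).2⟩
    | _ => exact .refl _ _

theorem isUnionFind_flatModel_of_partition (hk : 0 < k) (hH : 0 < H) (ha : ∀ i, 1 ≤ a i)
    (hB : ∀ j, ∑ i ∈ Finset.univ.filter (fun i => B i = j), a i = H) :
    IsUnionFind (flatModel k H a) := by
  let g (b : Fin k) : Fin H ≃ {p : Σ i, Fin (a i) // B p.1 = b} :=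
    (Fintype.equivFinOfCardEq ((card_sigma_fiber a B b).trans (hB b))).symm
  have isUnion_packedTree : IsUnion (packedTree g) :=
    (packedTree_isSaturated g hk hH ha).isUnion (packedTree_isRanked g)
  exact isUnionFind_iff_exists_isFlattening.2
    ⟨packedTree g, isUnion_packedTree, flatModel_isFlattening_packedTree g⟩

end Packing

section Unpacking

variable {k H m : ℕ} {a : Fin m → ℕ} {T : PreTree (FlatNode k H a)}

namespace PreTree.IsFlattening

theorem root_of_flatModel (h : (flatModel k H a).IsFlattening T) : T.root = .root :=
  h.root_eq.symm

theorem rank_of_flatModel (h : (flatModel k H a).IsFlattening T) (x : FlatNode k H a) :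
    T.rank x = x.rank := (congrFun h.rank_eq x).symm

theorem rank_lt_rank_parent (h : (flatModel k H a).IsFlattening T) (hT : T.IsRanked)
    {x : FlatNode k H a} (hx : x ≠ .root) : x.rank < (T.parent x).rank := by
  simpa only [h.rank_of_flatModel] using hT.rank_lt (h.root_of_flatModel ▸ hx)

theorem anc_root_iff_of_flatModel (h : (flatModel k H a).IsFlattening T) (hT : T.IsRanked)
    {x : FlatNode k H a} : T.Anc x .root ↔ x = .root := by
  have := anc_root_iff hT.parent_root (x := x)
  rwa [h.root_of_flatModel] at this

theorem parent_basketRoot (h : (flatModel k H a).IsFlattening T) (hT : T.IsRanked) (b : Fin k) :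
    T.parent (.basketRoot b) = .root :=
  FlatNode.eq_root_of_three_lt_rank (h.rank_lt_rank_parent hT (x := .basketRoot b) nofun)

theorem parent_appleRoot (h : (flatModel k H a).IsFlattening T) (hT : T.IsRanked) (i : Fin m) :
    T.parent (.appleRoot i) = .root ∨ ∃ b, T.parent (.appleRoot i) = .basketRoot b :=
  FlatNode.eq_root_or_eq_basketRoot_of_two_lt_rank
    (h.rank_lt_rank_parent hT (x := .appleRoot i) nofun)

theorem parent_appleArm (h : (flatModel k H a).IsFlattening T) (hT : T.IsRanked) (i : Fin m)
    (l : Fin (a i)) : T.parent (.appleArm i l) = .appleRoot i := by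
  have hlt := h.rank_lt_rank_parent hT (x := .appleArm i l) nofun
  have hanc : T.Anc (.appleRoot i) (T.parent (.appleArm i l)) := h.anc_parent (.appleArm i l)
  refine ((hT.eq_or_rank_lt hanc).resolve_right ?_).symm
  rw [h.rank_of_flatModel, h.rank_of_flatModel]
  exact fun hlt' => absurd (Nat.lt_of_le_of_lt hlt hlt') (lt_irrefl 2)

theorem parent_filler0 (h : (flatModel k H a).IsFlattening T) (hT : T.IsRanked)
    (hs : T.IsSaturated) : T.parent .filler0 = .root := by
  obtain ⟨z, hzroot, hzrank⟩ := hs .root 0 (by simp [h.rank_of_flatModel, FlatNode.rank])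
  have hanc : T.Anc z.parent (T.parent z) := h.anc_parent z
  rw [hzroot, h.anc_root_iff_of_flatModel hT] at hanc
  rw [h.rank_of_flatModel] at hzrank
  rwa [FlatNode.eq_filler0 hzrank hanc] at hzroot

theorem exists_leaf_child (h : (flatModel k H a).IsFlattening T) (hT : T.IsRanked)
    (hs : T.IsSaturated) {x : FlatNode k H a} (hx : x ≠ .root) (hrank : 0 < x.rank) :
    ∃ z, T.parent z = x ∧ z.rank = 0 ∧ z.parent ≠ .root ∧ T.Anc z.parent x := by
  obtain ⟨z, hzx, hz⟩ := hs x 0 (by rwa [h.rank_of_flatModel])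
  rw [h.rank_of_flatModel] at hz
  refine ⟨z, hzx, hz, fun hroot => ?_, hzx ▸ h.anc_parent z⟩
  rw [FlatNode.eq_filler0 hz hroot, h.parent_filler0 hT hs] at hzx
  exact hx hzx.symm

theorem exists_leaf_child_basketRoot (h : (flatModel k H a).IsFlattening T) (hT : T.IsRanked)
    (hs : T.IsSaturated) (b : Fin k) : ∃ l, T.parent (.basketLeaf b l) = .basketRoot b := by
  obtain ⟨z, hz, hzrank, hzroot, hanc⟩ := h.exists_leaf_child hT hs (x := .basketRoot b) nofun
    (by simp [FlatNode.rank])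
  rw [anc_iff_eq_or_anc_parent, h.parent_basketRoot hT, h.anc_root_iff_of_flatModel hT] at hanc
  obtain ⟨l, rfl⟩ := FlatNode.exists_eq_basketLeaf hzrank (hanc.resolve_right hzroot)
  exact ⟨l, hz⟩

theorem eq_appleLeaf_or_basketLeaf (h : (flatModel k H a).IsFlattening T) (hT : T.IsRanked)
    {z : FlatNode k H a} (hzrank : z.rank = 0) (hzroot : z.parent ≠ .root) {i : Fin m}
    (hanc : T.Anc z.parent (.appleRoot i)) :
    z = .appleLeaf i ∨ ∃ b l, T.parent (.appleRoot i) = .basketRoot b ∧ z = .basketLeaf b l := by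
  rw [anc_iff_eq_or_anc_parent] at hanc
  obtain hroot | ⟨b, hb⟩ := h.parent_appleRoot hT i
  · rw [hroot, h.anc_root_iff_of_flatModel hT] at hanc
    exact .inl (FlatNode.eq_appleLeaf hzrank (hanc.resolve_right hzroot))
  · rw [hb, anc_iff_eq_or_anc_parent, h.parent_basketRoot hT,
      h.anc_root_iff_of_flatModel hT] at hanc
    obtain hparent | hparent | hroot := hanc
    · exact .inl (FlatNode.eq_appleLeaf hzrank hparent)
    · obtain ⟨l, hl⟩ := FlatNode.exists_eq_basketLeaf hzrank hparent
      exact .inr ⟨b, l, hb, hl⟩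
    · exact absurd hroot hzroot

theorem exists_leaf_child_appleRoot (h : (flatModel k H a).IsFlattening T) (hT : T.IsRanked)
    (hs : T.IsSaturated) (i : Fin m) :
    ∃ z, T.parent z = .appleRoot i ∧
      (z = .appleLeaf i ∨
        ∃ b l, T.parent (.appleRoot i) = .basketRoot b ∧ z = .basketLeaf b l) := by
  obtain ⟨z, hz, hzrank, hzroot, hanc⟩ := h.exists_leaf_child hT hs (x := .appleRoot i) nofun
    (by simp [FlatNode.rank])
  exact ⟨z, hz, h.eq_appleLeaf_or_basketLeaf hT hzrank hzroot hanc⟩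

theorem exists_leaf_child_appleArm (h : (flatModel k H a).IsFlattening T) (hT : T.IsRanked)
    (hs : T.IsSaturated) (i : Fin m) (l : Fin (a i)) :
    ∃ z, T.parent z = .appleArm i l ∧
      (z = .appleLeaf i ∨
        ∃ b l, T.parent (.appleRoot i) = .basketRoot b ∧ z = .basketLeaf b l) := by
  obtain ⟨z, hz, hzrank, hzroot, hanc⟩ := h.exists_leaf_child hT hs (x := .appleArm i l) nofun
    (by simp [FlatNode.rank])
  rw [anc_iff_eq_or_anc_parent, h.parent_appleArm hT] at hanc
  exact ⟨z, hz, h.eq_appleLeaf_or_basketLeaf hT hzrank hzroot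
    (hanc.resolve_left (z.parent_ne_appleArm i l))⟩

theorem exists_parent_appleRoot (h : (flatModel k H a).IsFlattening T) (hT : T.IsRanked)
    (hs : T.IsSaturated) {i : Fin m} (hi : 1 ≤ a i) :
    ∃ b, T.parent (.appleRoot i) = .basketRoot b := by
  obtain ⟨x, hx, rfl | ⟨b, l, hb, -⟩⟩ := h.exists_leaf_child_appleRoot hT hs i
  · obtain ⟨y, hy, rfl | ⟨b, l, hb, -⟩⟩ := h.exists_leaf_child_appleArm hT hs i ⟨0, hi⟩
    · rw [hx] at hy
      exact absurd hy nofun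
    · exact ⟨b, hb⟩
  · exact ⟨b, hb⟩

end PreTree.IsFlattening

/-- The basket `b` and the nodes of its apples that need a leaf child, if `B` assigns the
apples to the baskets. -/
def FlatNode.demand (B : Fin m → Fin k) (b : Fin k) :
    Option (Σ i : {i // B i = b}, Option (Fin (a i))) → FlatNode k H a
  | none => .basketRoot b
  | some ⟨i, none⟩ => .appleRoot i
  | some ⟨i, some l⟩ => .appleArm i l

/-- The leaves available in the basket `b`, if `B` assigns the apples to the baskets. -/
def FlatNode.supply (B : Fin m → Fin k) (b : Fin k) : {i // B i = b} ⊕ Fin (H + 1) → FlatNode k H a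
  | .inl i => .appleLeaf i
  | .inr l => .basketLeaf b l

theorem FlatNode.demand_injective (B : Fin m → Fin k) (b : Fin k) :
    Function.Injective (FlatNode.demand B b : _ → FlatNode k H a) := by
  rintro (_ | ⟨⟨i, hi⟩, _ | l⟩) (_ | ⟨⟨j, hj⟩, _ | l'⟩) h <;> cases h <;> rfl

theorem PreTree.IsFlattening.exists_supply_child (h : (flatModel k H a).IsFlattening T)
    (hT : T.IsRanked) (hs : T.IsSaturated) {B : Fin m → Fin k}
    (hB : ∀ i, T.parent (.appleRoot i) = .basketRoot (B i)) (b : Fin k)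
    (d : Option (Σ i : {i // B i = b}, Option (Fin (a i)))) :
    ∃ s, T.parent (FlatNode.supply B b s) = FlatNode.demand B b d := by
  obtain _ | ⟨⟨i, rfl⟩, _ | l⟩ := d
  · obtain ⟨l, hl⟩ := h.exists_leaf_child_basketRoot hT hs b
    exact ⟨.inr l, hl⟩
  · obtain ⟨z, hz, rfl | ⟨b, l, hb, rfl⟩⟩ := h.exists_leaf_child_appleRoot hT hs i
    · exact ⟨.inl ⟨i, rfl⟩, hz⟩
    · cases (hB i).symm.trans hb
      exact ⟨.inr l, hz⟩
  · obtain ⟨z, hz, rfl | ⟨b, l', hb, rfl⟩⟩ := h.exists_leaf_child_appleArm hT hs i l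
    · exact ⟨.inl ⟨i, rfl⟩, hz⟩
    · cases (hB i).symm.trans hb
      exact ⟨.inr l', hz⟩

theorem PreTree.IsFlattening.sum_weight_le (h : (flatModel k H a).IsFlattening T)
    (hT : T.IsRanked) (hs : T.IsSaturated) {B : Fin m → Fin k}
    (hB : ∀ i, T.parent (.appleRoot i) = .basketRoot (B i)) (b : Fin k) :
    ∑ i ∈ Finset.univ.filter (fun i => B i = b), a i ≤ H := by
  choose s hparent using h.exists_supply_child hT hs hB b
  have hinj : Function.Injective s := fun d d' hdd' =>
    FlatNode.demand_injective B b (by rw [← hparent, hdd', hparent])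
  have hcard := Fintype.card_le_of_injective s hinj
  have hsum : ∑ i ∈ Finset.univ.filter (fun i => B i = b), a i = ∑ i : {i // B i = b}, a i :=
    Finset.sum_subtype _ (by simp) a
  simp only [Fintype.card_option, Fintype.card_sigma, Fintype.card_fin, Finset.sum_add_distrib,
    Finset.sum_const, Finset.card_univ, smul_eq_mul, mul_one, Fintype.card_sum] at hcard
  omega

theorem exists_partition_of_isUnionFind_flatModel (ha : ∀ i, 1 ≤ a i) (hsum : H * k = ∑ i, a i)
    (h : IsUnionFind (flatModel k H a)) :
    ∃ B : Fin m → Fin k, ∀ j, ∑ i ∈ Finset.univ.filter (fun i => B i = j), a i = H := by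
  obtain ⟨T, hT, hflat⟩ := isUnionFind_iff_exists_isFlattening.1 h
  choose B hB using fun i => hflat.exists_parent_appleRoot hT.isRanked hT.isSaturated (ha i)
  have sum_le (j : Fin k) : ∑ i ∈ Finset.univ.filter (fun i => B i = j), a i ≤ H :=
    hflat.sum_weight_le hT.isRanked hT.isSaturated hB j
  have sum_eq : ∑ j, ∑ i ∈ Finset.univ.filter (fun i => B i = j), a i = ∑ _j : Fin k, H := by
    rw [Finset.sum_fiberwise, ← hsum]
    simp [mul_comm]
  exact ⟨B, fun j =>
    (Finset.sum_eq_sum_iff_of_le fun j _ => sum_le j).1 sum_eq j (Finset.mem_univ j)⟩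

end Unpacking

/-- the flat tree with `k` baskets of size `H` and apples of weights
`a 1, …, a m` with `H · k = Σ a i` is a Union-Find tree iff the `Partition`
instance is solvable: the apples can be distributed among the `k` baskets so that
each basket receives total weight exactly `H`. -/
theorem flatTree_isUnionFind_iff_partition (k H m : ℕ) (hk : 0 < k) (hH : 0 < H)
    (a : Fin m → ℕ) (ha : ∀ i, 1 ≤ a i) (hsum : H * k = ∑ i, a i) :
    IsUnionFind (flatTree k H m a) ↔
      ∃ B : Fin m → Fin k,
        ∀ j, ∑ i ∈ Finset.univ.filter (fun i => B i = j), a i = H := by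
  refine ⟨fun h => ?_, fun ⟨B, hB⟩ => ?_⟩
  · exact exists_partition_of_isUnionFind_flatModel ha hsum (.iso _ _ h ⟨(flatModelIso k H a).symm⟩)
  · exact .iso _ _ (isUnionFind_flatModel_of_partition hk hH ha hB) ⟨flatModelIso k H a⟩
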